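/- arXiv:1506.02913 — 3 statements merged into one kernel-verified Lean document; each statement's English description precedes it below -/
import Mathlib

section
/- There is a decreasing chain of 7 word equations in 3 variables with solutions taken in the free semigroup on two letters; explicitly, with variables x, y, z, the sequence xxyz = zxyx; xxyxzyz = zzyxxyx; xz = zx; xy = yx; x = y; x = z; xx = x is a decreasing chain. Hence dc₊(3) ≥ 7 for free semigroups. -/
/-- A semigroup morphism `h` from the free semigroup on the variables `Ξ` to a
semigroup `S` is a solution of the equation `E = (U, V)` if `h U = h V`. -/
def IsSolutionS {Ξ S : Type*} [Semigroup S] (h : FreeSemigroup Ξ →ₙ* S)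
    (E : FreeSemigroup Ξ × FreeSemigroup Ξ) : Prop :=
  h E.1 = h E.2

/-- The variable `x`. -/
def x : FreeSemigroup (Fin 3) := FreeSemigroup.of 0
/-- The variable `y`. -/
def y : FreeSemigroup (Fin 3) := FreeSemigroup.of 1
/-- The variable `z`. -/
def z : FreeSemigroup (Fin 3) := FreeSemigroup.of 2

/-- The sequence of equations
`xxyz = zxyx; xxyxzyz = zzyxxyx; xz = zx; xy = yx; x = y; x = z; xx = x`. -/
def chain3plus : Fin 7 → FreeSemigroup (Fin 3) × FreeSemigroup (Fin 3) :=
  ![(x * x * y * z, z * x * y * x),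
    (x * x * y * x * z * y * z, z * z * y * x * x * y * x),
    (x * z, z * x),
    (x * y, y * x),
    (x, y),
    (x, z),
    (x * x, x)]

/-- The nonempty word with first letter `a` and remaining letters `l`. -/
def wd (a : Fin 2) (l : List (Fin 2)) : FreeSemigroup (Fin 2) := ⟨a, l⟩

/-- Being a solution, expressed by comparing first letters and tails. -/
theorem sol_iff (h : FreeSemigroup (Fin 3) →ₙ* FreeSemigroup (Fin 2))
    (E : FreeSemigroup (Fin 3) × FreeSemigroup (Fin 3)) :
    IsSolutionS h E ↔ ((h E.1).head = (h E.2).head ∧ (h E.1).tail = (h E.2).tail) := by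
  unfold IsSolutionS
  exact FreeSemigroup.ext_iff

/-- The above sequence of 7 word equations in 3 variables is a decreasing chain,
with solutions taken in the free semigroup on two letters. Hence dc₊(3) ≥ 7. -/
theorem chain3plus_is_decreasing_chain :
    ∀ i : Fin 7, ∃ h : FreeSemigroup (Fin 3) →ₙ* FreeSemigroup (Fin 2),
      (∀ j : Fin 7, j < i → IsSolutionS h (chain3plus j)) ∧ ¬ IsSolutionS h (chain3plus i) := by
  intro i
  fin_cases i
  · refine ⟨FreeSemigroup.lift ![wd 0 [], wd 1 [], wd 1 []], ?_⟩
    simp only [sol_iff]; decide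
  · refine ⟨FreeSemigroup.lift ![wd 0 [], wd 1 [0, 0, 1], wd 0 [0, 1, 0]], ?_⟩
    simp only [sol_iff]; decide
  · refine ⟨FreeSemigroup.lift ![wd 0 [], wd 1 [], wd 0 [0, 1, 0]], ?_⟩
    simp only [sol_iff]; decide
  · refine ⟨FreeSemigroup.lift ![wd 0 [], wd 1 [], wd 0 []], ?_⟩
    simp only [sol_iff]; decide
  · refine ⟨FreeSemigroup.lift ![wd 0 [], wd 0 [0], wd 0 []], ?_⟩
    simp only [sol_iff]; decide
  · refine ⟨FreeSemigroup.lift ![wd 0 [], wd 0 [], wd 0 [0]], ?_⟩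
    simp only [sol_iff]; decide
  · refine ⟨FreeSemigroup.lift ![wd 0 [], wd 0 [], wd 0 []], ?_⟩
    simp only [sol_iff]; decide
end

section
/- For every n ≥ 4 there is an independent system of (n² − 5n + 6)/2 word equations in n variables, with solutions taken in the free monoid on two letters, having a nonperiodic solution. Explicitly, with variables x, y, z_1, …, z_{n−2}, the system consisting of the equations x y x z_i z_j y z_i z_j = z_i z_j x z_i z_j y x y, for 1 ≤ i < j ≤ n−2, is independent and has a nonperiodic solution. Hence is'(n) ≥ (n² − 5n + 6)/2. -/
/-- A monoid morphism `h` from the free monoid on the variables `Ξ` to a monoid `M`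
is a solution of the equation `E = (U, V)` if `h U = h V`. -/
def IsSolution {Ξ M : Type*} [Monoid M] (h : FreeMonoid Ξ →* M)
    (E : FreeMonoid Ξ × FreeMonoid Ξ) : Prop :=
  h E.1 = h E.2

/-- A solution is periodic if the images of all variables are powers of a common word. -/
def IsPeriodic {Ξ A : Type*} (h : FreeMonoid Ξ →* FreeMonoid A) : Prop :=
  ∃ t : FreeMonoid A, ∀ v : Ξ, ∃ k : ℕ, h (FreeMonoid.of v) = t ^ k

/-- The variables are `x`, `y` and `z_1, …, z_(n-2)`, i.e. the `n` elements of
`Fin 2 ⊕ Fin (n-2)`. The variable `x`. -/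
def xv {n : ℕ} : FreeMonoid (Fin 2 ⊕ Fin (n - 2)) := FreeMonoid.of (Sum.inl 0)
/-- The variable `y`. -/
def yv {n : ℕ} : FreeMonoid (Fin 2 ⊕ Fin (n - 2)) := FreeMonoid.of (Sum.inl 1)
/-- The variable `z_k`. -/
def zv {n : ℕ} (k : Fin (n - 2)) : FreeMonoid (Fin 2 ⊕ Fin (n - 2)) :=
  FreeMonoid.of (Sum.inr k)

/-- The equation `x y x z_i z_j y z_i z_j = z_i z_j x z_i z_j y x y`. -/
def eqn {n : ℕ} (i j : Fin (n - 2)) :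
    FreeMonoid (Fin 2 ⊕ Fin (n - 2)) × FreeMonoid (Fin 2 ⊕ Fin (n - 2)) :=
  (xv * yv * xv * zv i * zv j * yv * zv i * zv j,
   zv i * zv j * xv * zv i * zv j * yv * xv * yv)

/-- The system consisting of the above equations for `i < j`. -/
def system (n : ℕ) : Set (FreeMonoid (Fin 2 ⊕ Fin (n - 2)) × FreeMonoid (Fin 2 ⊕ Fin (n - 2))) :=
  {e | ∃ i j : Fin (n - 2), i < j ∧ e = eqn i j}

lemma eqn_inj {n : ℕ} {i j k l : Fin (n - 2)} (h : eqn i j = eqn k l) : i = k ∧ j = l := by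
  have h1 := congrArg (fun e => FreeMonoid.toList e.1) h
  simp [eqn, xv, yv, zv] at h1
  exact ⟨h1.1, h1.2.1⟩

lemma two_card_lt (m : ℕ) :
    2 * ((Finset.univ.filter (fun p : Fin m × Fin m => p.1 < p.2)).card) = m * (m - 1) := by
  have h : (Finset.univ.filter (fun p : Fin m × Fin m => p.1 < p.2)).card
      = ∑ j : Fin m, (j : ℕ) := by
    rw [Finset.card_filter, Fintype.sum_prod_type_right]
    refine Finset.sum_congr rfl (fun j _ => ?_)
    rw [← Finset.card_filter, Finset.filter_gt_eq_Iio, Fin.card_Iio]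
  rw [h, Fin.sum_univ_eq_sum_range (fun i => i) m, mul_comm, Finset.sum_range_id_mul_two]

/-- `x ↦ a`, `y ↦ b`, and `z_k ↦ ab` if `p k`, `z_k ↦ 1` otherwise. -/
def morph {n : ℕ} (p : Fin (n - 2) → Bool) :
    FreeMonoid (Fin 2 ⊕ Fin (n - 2)) →* FreeMonoid (Fin 2) :=
  FreeMonoid.lift (Sum.elim FreeMonoid.of
    (fun k => if p k then FreeMonoid.of 0 * FreeMonoid.of 1 else 1))

lemma morph_sol {n : ℕ} (p : Fin (n - 2) → Bool) (i j : Fin (n - 2)) :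
    IsSolution (morph p) (eqn i j) ↔ ¬ (p i = true ∧ p j = true) := by
  unfold IsSolution
  simp only [eqn, xv, yv, zv, morph, map_mul, FreeMonoid.lift_eval_of, Sum.elim_inl, Sum.elim_inr]
  cases p i <;> cases p j <;> simp [← FreeMonoid.toList.injective.eq_iff]

/-- For every `n ≥ 4`, the above system of word equations in `n` variables consists of
`(n² - 5n + 6)/2` equations, is independent (with solutions taken in the free monoid on
two letters), and has a nonperiodic solution. Hence is'(n) ≥ (n² − 5n + 6)/2. -/
theorem system_card_independent_nonperiodic (n : ℕ) (hn : 4 ≤ n) :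
    2 * ((system n).ncard : ℤ) = (n : ℤ) ^ 2 - 5 * n + 6 ∧
    (∀ e ∈ system n, ∃ h : FreeMonoid (Fin 2 ⊕ Fin (n - 2)) →* FreeMonoid (Fin 2),
      (∀ e' ∈ system n, e' ≠ e → IsSolution h e') ∧ ¬ IsSolution h e) ∧
    (∃ h : FreeMonoid (Fin 2 ⊕ Fin (n - 2)) →* FreeMonoid (Fin 2),
      (∀ e ∈ system n, IsSolution h e) ∧ ¬ IsPeriodic h) := by
  refine ⟨?_, ?_, ?_⟩
  · have hs : system n = Set.image (fun p : Fin (n - 2) × Fin (n - 2) => eqn p.1 p.2)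
        ((Finset.univ.filter (fun p : Fin (n - 2) × Fin (n - 2) => p.1 < p.2) : Finset _) :
          Set (Fin (n - 2) × Fin (n - 2))) := by
      ext e
      simp [system, eq_comm]
    have hinj : Function.Injective (fun p : Fin (n - 2) × Fin (n - 2) => eqn p.1 p.2) := by
      intro p q h
      exact Prod.ext (eqn_inj h).1 (eqn_inj h).2
    rw [hs, Set.ncard_image_of_injective _ hinj, Set.ncard_coe_finset]
    have h2 := two_card_lt (n - 2)
    obtain ⟨m, rfl⟩ : ∃ m, n = m + 3 := ⟨n - 3, by omega⟩
    have h3 : m + 3 - 2 - 1 = m := by omega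
    have h4 : ((m + 3 - 2 : ℕ) : ℤ) = m + 1 := by omega
    rw [h3] at h2
    have h5 := congrArg (fun t : ℕ => (t : ℤ)) h2
    push_cast [h4] at h5
    push_cast
    rw [h5]
    ring
  · rintro e ⟨i, j, hij, rfl⟩
    refine ⟨morph (fun k => decide (k = i ∨ k = j)), ?_, ?_⟩
    · rintro e' ⟨k, l, hkl, rfl⟩ hne
      rw [morph_sol]
      simp only [decide_eq_true_eq]
      rintro ⟨rfl | rfl, rfl | rfl⟩
      · exact lt_irrefl _ hkl
      · exact hne rfl
      · exact lt_asymm hij hkl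
      · exact lt_irrefl _ hkl
    · rw [morph_sol]
      simp
  · refine ⟨morph (fun _ => false), ?_, ?_⟩
    · rintro e ⟨i, j, hij, rfl⟩
      rw [morph_sol]
      simp
    · rintro ⟨t, ht⟩
      obtain ⟨k, hk⟩ := ht (Sum.inl 0)
      obtain ⟨l, hl⟩ := ht (Sum.inl 1)
      simp only [morph, FreeMonoid.lift_eval_of, Sum.elim_inl] at hk hl
      have hc : (FreeMonoid.of 0 * FreeMonoid.of 1 : FreeMonoid (Fin 2))
          = FreeMonoid.of 1 * FreeMonoid.of 0 := by
        rw [hk, hl, ← pow_add, ← pow_add, add_comm]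
      have hd := congrArg FreeMonoid.toList hc
      simp at hd
end

section
/- For every n ≥ 3 there is a decreasing chain of (n² + 3n − 4)/2 word equations in n variables, with solutions taken in the free monoid on two letters. Explicitly, with variables x, y, z_1, …, z_{n−2}, such a chain is obtained by listing, in order: the equations x y z_k = z_k x y for k ∈ {1, …, n−2}; then the equations x y x z_k y z_k = z_k x z_k y x y for k ∈ {1, …, n−2}; then the equations x y x z_i z_j y z_i z_j = z_i z_j x z_i z_j y x y for 1 ≤ i < j ≤ n−2; then the equations x z_k = z_k x for k ∈ {1, …, n−2}; then x y = y x; then x = 1; y = 1; and z_k = 1 for k ∈ {1, …, n−2}. Hence dc(n) ≥ (n² + 3n − 4)/2. -/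
/-- A list of equations `L` is a decreasing chain (with solutions in `M`) if for every
position `i` there is a morphism that is a solution of all earlier equations of the list
but not of the `i`-th one. -/
def IsDecreasingChain {Ξ : Type*} (M : Type*) [Monoid M]
    (L : List (FreeMonoid Ξ × FreeMonoid Ξ)) : Prop :=
  ∀ i : Fin L.length, ∃ h : FreeMonoid Ξ →* M,
    (∀ j : Fin L.length, j < i → IsSolution h (L.get j)) ∧ ¬ IsSolution h (L.get i)

/-- The list of equations: first `x y z_k = z_k x y` for all `k`; then
`x y x z_k y z_k = z_k x z_k y x y` for all `k`; then
`x y x z_i z_j y z_i z_j = z_i z_j x z_i z_j y x y` for all `i < j`; then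
`x z_k = z_k x` for all `k`; then `x y = y x`; then `x = 1`; `y = 1`; and
`z_k = 1` for all `k`. -/
def chain (n : ℕ) : List (FreeMonoid (Fin 2 ⊕ Fin (n - 2)) × FreeMonoid (Fin 2 ⊕ Fin (n - 2))) :=
  ((List.finRange (n - 2)).map fun k => (xv * yv * zv k, zv k * xv * yv)) ++
  ((List.finRange (n - 2)).map fun k =>
    (xv * yv * xv * zv k * yv * zv k, zv k * xv * zv k * yv * xv * yv)) ++
  ((List.finRange (n - 2)).flatMap fun i =>
    (((List.finRange (n - 2)).filter fun j => i < j).map fun j =>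
      (xv * yv * xv * zv i * zv j * yv * zv i * zv j,
       zv i * zv j * xv * zv i * zv j * yv * xv * yv))) ++
  ((List.finRange (n - 2)).map fun k => (xv * zv k, zv k * xv)) ++
  [(xv * yv, yv * xv), (xv, 1), (yv, 1)] ++
  ((List.finRange (n - 2)).map fun k => (zv k, 1))

/-- Decreasing chain relative to a list `S` of equations already imposed. -/
def DCh {Ξ : Type*} (M : Type*) [Monoid M] :
    List (FreeMonoid Ξ × FreeMonoid Ξ) → List (FreeMonoid Ξ × FreeMonoid Ξ) → Prop
  | _, [] => True
  | S, e :: L => (∃ h : FreeMonoid Ξ →* M, (∀ s ∈ S, IsSolution h s) ∧ ¬ IsSolution h e) ∧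
      DCh M (S ++ [e]) L

theorem DCh.append {Ξ M : Type*} [Monoid M] (L₁ L₂ : List (FreeMonoid Ξ × FreeMonoid Ξ)) :
    ∀ S, DCh M S L₁ → DCh M (S ++ L₁) L₂ → DCh M S (L₁ ++ L₂) := by
  induction L₁ with
  | nil => intro S _ h; simpa using h
  | cons e L ih =>
    intro S h1 h2
    refine ⟨h1.1, ih _ h1.2 ?_⟩
    simpa using h2

theorem DCh.get {Ξ M : Type*} [Monoid M] (L : List (FreeMonoid Ξ × FreeMonoid Ξ)) :
    ∀ S, DCh M S L → ∀ i : Fin L.length, ∃ h : FreeMonoid Ξ →* M,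
      (∀ s ∈ S, IsSolution h s) ∧
      (∀ j : Fin L.length, j < i → IsSolution h (L.get j)) ∧ ¬ IsSolution h (L.get i) := by
  induction L with
  | nil => intro S _ i; exact i.elim0
  | cons e L ih =>
    intro S hS i
    refine Fin.cases ?_ (fun i => ?_) i
    · obtain ⟨h, h1, h2⟩ := hS.1
      exact ⟨h, h1, fun j hj => absurd hj (Fin.not_lt_zero j), h2⟩
    · obtain ⟨h, h1, h2, h3⟩ := ih _ hS.2 i
      refine ⟨h, fun s hs => h1 s (by simp [hs]), fun j => ?_, h3⟩
      refine Fin.cases (fun _ => ?_) (fun j hj => ?_) j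
      · exact h1 e (by simp)
      · exact h2 j (Fin.succ_lt_succ_iff.mp hj)

theorem DCh.map {Ξ M ι : Type*} [Monoid M] (f : ι → FreeMonoid Ξ × FreeMonoid Ξ) (l : List ι) :
    l.Nodup → ∀ S, (∀ k ∈ l, ∃ h : FreeMonoid Ξ →* M, (∀ s ∈ S, IsSolution h s) ∧
      (∀ j ∈ l, j ≠ k → IsSolution h (f j)) ∧ ¬ IsSolution h (f k)) → DCh M S (l.map f) := by
  induction l with
  | nil => intros; trivial
  | cons a l ih =>
    intro hn S H
    rw [List.nodup_cons] at hn
    refine ⟨?_, ih hn.2 _ ?_⟩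
    · obtain ⟨h, h1, _, h3⟩ := H a (by simp)
      exact ⟨h, h1, h3⟩
    · intro k hk
      obtain ⟨h, h1, h2, h3⟩ := H k (by simp [hk])
      refine ⟨h, ?_, fun j hj hjk => h2 j (by simp [hj]) hjk, h3⟩
      intro s hs
      rcases List.mem_append.mp hs with hs | hs
      · exact h1 s hs
      · rw [List.mem_singleton] at hs
        subst hs
        exact h2 a (by simp) (fun h => hn.1 (h ▸ hk))

/-- The morphism with given values on the variables. -/
def mor {m : ℕ} (X Y : FreeMonoid (Fin 2)) (Z : Fin m → FreeMonoid (Fin 2)) :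
    FreeMonoid (Fin 2 ⊕ Fin m) →* FreeMonoid (Fin 2) :=
  FreeMonoid.lift (Sum.elim ![X, Y] Z)

theorem mor_x {n : ℕ} (X Y : FreeMonoid (Fin 2)) (Z : Fin (n - 2) → FreeMonoid (Fin 2)) :
    mor X Y Z xv = X := by simp [mor, xv]
theorem mor_y {n : ℕ} (X Y : FreeMonoid (Fin 2)) (Z : Fin (n - 2) → FreeMonoid (Fin 2)) :
    mor X Y Z yv = Y := by simp [mor, yv]
theorem mor_z {n : ℕ} (X Y : FreeMonoid (Fin 2)) (Z : Fin (n - 2) → FreeMonoid (Fin 2))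
    (k : Fin (n - 2)) : mor X Y Z (zv k) = Z k := by simp [mor, zv]

instance instDecFM : DecidableEq (FreeMonoid (Fin 2)) :=
  inferInstanceAs (DecidableEq (List (Fin 2)))

/-- The letters. -/
abbrev la : FreeMonoid (Fin 2) := FreeMonoid.of 0
abbrev lb : FreeMonoid (Fin 2) := FreeMonoid.of 1

/-- The pairs `i < j`. -/
def prs (m : ℕ) : List (Fin m × Fin m) :=
  (List.finRange m).flatMap fun i => ((List.finRange m).filter fun j => i < j).map fun j => (i, j)

theorem mem_prs {m : ℕ} (p : Fin m × Fin m) : p ∈ prs m ↔ p.1 < p.2 := by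
  rcases p with ⟨i, j⟩
  simp [prs]

theorem nodup_prs (m : ℕ) : (prs m).Nodup := by
  unfold prs
  rw [List.nodup_flatMap]
  refine ⟨fun i _ => ?_, ?_⟩
  · exact List.Nodup.map (fun a b h => (Prod.mk.inj h).2) ((List.nodup_finRange m).filter _)
  · refine (List.nodup_finRange m).imp ?_
    intro a b hab
    simp only [Function.onFun, List.disjoint_left, List.mem_map]
    rintro _ ⟨j, _, rfl⟩ ⟨j', _, h⟩
    exact hab (Prod.mk.inj h).1.symm

theorem length_prs (m : ℕ) : (prs m).length * 2 = m * (m - 1) := by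
  have h1 : (prs m).length = (prs m).toFinset.card :=
    (List.toFinset_card_of_nodup (nodup_prs m)).symm
  have h2 : (prs m).toFinset = ((Finset.univ : Finset (Fin m)).sigma (fun i => Finset.Ioi i)).map
      (Equiv.sigmaEquivProd (Fin m) (Fin m)).toEmbedding := by
    ext ⟨i, j⟩
    simp [mem_prs]
  rw [h1, h2, Finset.card_map, Finset.card_sigma]
  simp only [Fin.card_Ioi]
  rw [Fin.sum_univ_eq_sum_range (fun i => m - 1 - i) m, Finset.sum_range_reflect (fun i => i) m,
    Finset.sum_range_id_mul_two]

theorem chain_eq (n : ℕ) : chain n =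
  ((List.finRange (n - 2)).map fun k => (xv * yv * zv k, zv k * xv * yv)) ++
  ((List.finRange (n - 2)).map fun k =>
    (xv * yv * xv * zv k * yv * zv k, zv k * xv * zv k * yv * xv * yv)) ++
  ((prs (n - 2)).map fun p =>
      (xv * yv * xv * zv p.1 * zv p.2 * yv * zv p.1 * zv p.2,
       zv p.1 * zv p.2 * xv * zv p.1 * zv p.2 * yv * xv * yv)) ++
  ((List.finRange (n - 2)).map fun k => (xv * zv k, zv k * xv)) ++
  [(xv * yv, yv * xv), (xv, 1), (yv, 1)] ++
  ((List.finRange (n - 2)).map fun k => (zv k, 1)) := by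
  simp [chain, prs, List.map_flatMap, Function.comp_def]

theorem chain_length_and_decreasing (n : ℕ) (hn : 3 ≤ n) :
    (chain n).length = (n ^ 2 + 3 * n - 4) / 2 ∧
    IsDecreasingChain (FreeMonoid (Fin 2)) (chain n) := by
  rw [chain_eq]
  constructor
  · have h := length_prs (n - 2)
    obtain ⟨m, rfl⟩ : ∃ m, n = m + 3 := ⟨n - 3, by omega⟩
    simp only [List.length_append, List.length_map, List.length_finRange, List.length_cons,
      List.length_nil]
    have e1 : m + 3 - 2 = m + 1 := by omega
    have e2 : m + 1 - 1 = m := by omega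
    rw [e1] at h ⊢
    rw [e2] at h
    have : (m + 3) ^ 2 + 3 * (m + 3) - 4 = (m + 1) * m + 8 * m + 14 := by
      rw [Nat.sub_eq_iff_eq_add (by nlinarith)]; ring
    rw [this]
    omega
  · intro i
    suffices H : DCh (FreeMonoid (Fin 2)) [] _ by
      obtain ⟨h, _, h2⟩ := DCh.get _ _ H i
      exact ⟨h, h2⟩
    refine DCh.append _ _ _ (DCh.append _ _ _ (DCh.append _ _ _ (DCh.append _ _ _
      (DCh.append _ _ _ ?_ ?_) ?_) ?_) ?_) ?_
    · refine DCh.map _ _ (List.nodup_finRange _) _ fun k _ =>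
        ⟨mor lb 1 (fun j => if j = k then la else 1), ?_⟩
      simp +contextual [IsSolution, mor_x, mor_y, mor_z]
      decide
    · refine DCh.map _ _ (List.nodup_finRange _) _ fun k _ =>
        ⟨mor la lb (fun j => if j = k then la * lb * la * lb else 1), ?_⟩
      simp +contextual [IsSolution, mor_x, mor_y, mor_z, mul_assoc]
      decide
    · refine DCh.map _ _ (nodup_prs _) _ fun p hp =>
        ⟨mor la lb (fun j => if j = p.1 ∨ j = p.2 then la * lb else 1), ?_, ?_, ?_⟩
      · simp only [List.nil_append, List.mem_append, List.mem_map, or_imp, forall_and]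
        refine ⟨?_, ?_⟩ <;> rintro _ ⟨k, _, rfl⟩ <;>
          simp only [IsSolution, map_mul, mor_x, mor_y, mor_z] <;> split_ifs <;> simp [mul_assoc]
      · rintro ⟨i, j⟩ hij hne
        rw [mem_prs] at hij hp
        have : ¬ ((i = p.1 ∨ i = p.2) ∧ (j = p.1 ∨ j = p.2)) := by
          rintro ⟨h1, h2⟩
          apply hne
          rcases p with ⟨p, q⟩
          simp only at *
          ext <;> simp only <;> omega
        simp only [IsSolution, map_mul, mor_x, mor_y, mor_z]
        split_ifs with h1 h2 h2
        · exact absurd ⟨h1, h2⟩ this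
        all_goals simp [mul_assoc]
      · simp only [IsSolution, map_mul, mor_x, mor_y, mor_z, true_or, or_true, if_true]
        decide
    · refine DCh.map _ _ (List.nodup_finRange _) _ fun k _ =>
        ⟨mor la lb (fun j => if j = k then la * lb else 1), ?_, ?_, ?_⟩
      · simp only [List.nil_append, List.mem_append, List.mem_map, or_imp, forall_and]
        refine ⟨⟨?_, ?_⟩, ?_⟩
        · rintro _ ⟨k, _, rfl⟩
          simp only [IsSolution, map_mul, mor_x, mor_y, mor_z]
          split_ifs <;> simp [mul_assoc]
        · rintro _ ⟨k, _, rfl⟩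
          simp only [IsSolution, map_mul, mor_x, mor_y, mor_z]
          split_ifs <;> simp [mul_assoc]
        · rintro _ ⟨⟨i, j⟩, hij, rfl⟩
          rw [mem_prs] at hij
          simp only [IsSolution, map_mul, mor_x, mor_y, mor_z]
          split_ifs with h1 h2 h2
          · subst h1; subst h2; exact absurd hij (lt_irrefl _)
          all_goals simp [mul_assoc]
      · intro j _ hj
        simp [IsSolution, mor_x, mor_z, hj]
      · simp only [IsSolution, map_mul, mor_x, mor_y, mor_z, if_true]
        decide
    · refine ⟨⟨mor la lb (fun j => 1), ?_, ?_⟩, ⟨mor la 1 (fun j => 1), ?_, ?_⟩,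
        ⟨mor 1 la (fun j => 1), ?_, ?_⟩, trivial⟩
      · simp only [List.nil_append, List.mem_append, List.mem_map, or_imp, forall_and]
        refine ⟨⟨⟨?_, ?_⟩, ?_⟩, ?_⟩ <;> rintro _ ⟨k, _, rfl⟩ <;>
          simp [IsSolution, mor_x, mor_y, mor_z, mul_assoc]
      · simp only [IsSolution, map_mul, mor_x, mor_y]
        decide
      · simp only [List.nil_append, List.mem_append, List.mem_map, or_imp, forall_and,
          List.mem_singleton, forall_eq]
        refine ⟨⟨⟨⟨?_, ?_⟩, ?_⟩, ?_⟩, ?_⟩ <;> (try rintro _ ⟨k, _, rfl⟩) <;>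
          simp [IsSolution, mor_x, mor_y, mor_z]
      · simp only [IsSolution, map_one, mor_x]
        decide
      · simp only [List.nil_append, List.mem_append, List.mem_map, or_imp, forall_and,
          List.mem_singleton, forall_eq]
        refine ⟨⟨⟨⟨⟨?_, ?_⟩, ?_⟩, ?_⟩, ?_⟩, ?_⟩ <;> (try rintro _ ⟨k, _, rfl⟩) <;>
          simp [IsSolution, mor_x, mor_y, mor_z]
      · simp only [IsSolution, map_one, mor_y]
        decide
    · refine DCh.map _ _ (List.nodup_finRange _) _ fun k _ =>
        ⟨mor 1 1 (fun j => if j = k then la else 1), ?_, ?_, ?_⟩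
      · simp only [List.nil_append, List.mem_append, List.mem_map, or_imp, forall_and,
          List.mem_cons, List.not_mem_nil, false_imp_iff, forall_eq, implies_true, and_true]
        refine ⟨⟨⟨⟨?_, ?_⟩, ?_⟩, ?_⟩, ?_, ?_, ?_⟩ <;> (try rintro _ ⟨k, _, rfl⟩) <;>
          simp [IsSolution, mor_x, mor_y, mor_z, mul_assoc]
      · intro j _ hj
        simp [IsSolution, mor_z, hj]
      · simp only [IsSolution, map_one, mor_z, if_true]
        decide
end
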